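/- arXiv:1203.2243 — 10 statements merged into one kernel-verified Lean document; each statement's English description precedes it below -/
import Mathlib

section
/- In a two-right-angled quadrilateral A E Γ Δ with base ΔΓ (right angles at Δ and Γ, with A and E strictly on the same side of the line through Δ and Γ), if the legs satisfy dist A Δ > dist E Γ, then the summit angle adjacent to the shorter leg is greater: ∠ A E Γ > ∠ Δ A E. -/
open EuclideanGeometry Real RealInnerProductSpace

theorem stmt4 (A E Γ Δ : EuclideanSpace ℝ (Fin 2))
    (hne : Δ ≠ Γ)
    (hAd : ∠ A Δ Γ = π / 2)
    (hEg : ∠ E Γ Δ = π / 2)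
    (hside : AffineSubspace.SSameSide line[ℝ, Δ, Γ] A E)
    (hlt : dist A Δ > dist E Γ) :
    ∠ A E Γ > ∠ Δ A E := by
  obtain ⟨⟨p₁, hp₁, p₂, hp₂, hray⟩, hA, hE⟩ := hside
  have hr : ∃ r₁ r₂ : ℝ, 0 < r₁ ∧ 0 < r₂ ∧ r₁ • (A -ᵥ p₁) = r₂ • (E -ᵥ p₂) := by
    rcases hray with h | h | h
    · exact absurd ((vsub_eq_zero_iff_eq.1 h) ▸ hp₁) hA
    · exact absurd ((vsub_eq_zero_iff_eq.1 h) ▸ hp₂) hE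
    · exact h
  obtain ⟨r₁, r₂, hr₁, hr₂, hr⟩ := hr
  have hAΔ : A ≠ Δ := fun h => hA (h ▸ left_mem_affineSpan_pair ℝ Δ Γ)
  have hEΓ : E ≠ Γ := fun h => hE (h ▸ right_mem_affineSpan_pair ℝ Δ Γ)
  obtain ⟨a, rfl⟩ := mem_affineSpan_pair_iff_exists_lineMap_eq.1 hp₁
  obtain ⟨b, rfl⟩ := mem_affineSpan_pair_iff_exists_lineMap_eq.1 hp₂
  have h1 := InnerProductGeometry.inner_eq_zero_iff_angle_eq_pi_div_two _ _ |>.2 hAd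
  have h2 := InnerProductGeometry.inner_eq_zero_iff_angle_eq_pi_div_two _ _ |>.2 hEg
  have hr0 := congrArg (fun x : EuclideanSpace ℝ (Fin 2) => x 0) hr
  have hr1 := congrArg (fun x : EuclideanSpace ℝ (Fin 2) => x 1) hr
  have hlt' : dist E Γ ^ 2 < dist A Δ ^ 2 := by gcongr
  rw [EuclideanSpace.dist_sq_eq, EuclideanSpace.dist_sq_eq] at hlt'
  have hd : 0 < dist Δ Γ ^ 2 := by have := dist_pos.2 hne; positivity
  have hu : 0 < dist A Δ ^ 2 := by have := dist_pos.2 hAΔ; positivity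
  have hv : 0 < dist E Γ ^ 2 := by have := dist_pos.2 hEΓ; positivity
  rw [EuclideanSpace.dist_sq_eq] at hd hu hv
  simp [PiLp.inner_apply, Fin.sum_univ_two, AffineMap.lineMap_apply, Real.dist_eq, sq_abs] at h1 h2 hr0 hr1 hlt' hd hu hv
  have key : 0 < inner ℝ (Δ -ᵥ A) (E -ᵥ A) ∧ inner ℝ (A -ᵥ E) (Γ -ᵥ E) < 0 := by
    simp [PiLp.inner_apply, Fin.sum_univ_two]
    obtain ⟨u0, hu0⟩ : ∃ x, x = A 0 - Δ 0 := ⟨_, rfl⟩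
    obtain ⟨u1, hu1⟩ : ∃ x, x = A 1 - Δ 1 := ⟨_, rfl⟩
    obtain ⟨v0, hv0⟩ : ∃ x, x = E 0 - Γ 0 := ⟨_, rfl⟩
    obtain ⟨v1, hv1⟩ : ∃ x, x = E 1 - Γ 1 := ⟨_, rfl⟩
    obtain ⟨d0, hd0⟩ : ∃ x, x = Δ 0 - Γ 0 := ⟨_, rfl⟩
    obtain ⟨d1, hd1⟩ : ∃ x, x = Δ 1 - Γ 1 := ⟨_, rfl⟩
    have eA0 : A 0 = u0 + d0 + Γ 0 := by linarith
    have eA1 : A 1 = u1 + d1 + Γ 1 := by linarith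
    have eE0 : E 0 = v0 + Γ 0 := by linarith
    have eE1 : E 1 = v1 + Γ 1 := by linarith
    have eD0 : Δ 0 = d0 + Γ 0 := by linarith
    have eD1 : Δ 1 = d1 + Γ 1 := by linarith
    rw [eA0, eD0] at hr0 h1 hlt' hu
    rw [eA1, eD1] at hr1 h1 hlt' hu
    rw [eE0, eE1] at h2 hlt' hv
    rw [eE0] at hr0
    rw [eE1] at hr1
    rw [eD0] at h2 hd
    rw [eD1] at h2 hd
    rw [eA0, eA1, eE0, eE1, eD0, eD1]
    clear eA0 eA1 eE0 eE1 eD0 eD1 hu0 hu1 hv0 hv1 hd0 hd1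
    ring_nf at h1 h2 hr0 hr1 hlt' hd hu hv
    have h1' : u0 * d0 + u1 * d1 = 0 := by linarith
    have h2' : v0 * d0 + v1 * d1 = 0 := by linarith
    have hc : u0 * v1 - u1 * v0 = 0 := by
      have : (u0 * v1 - u1 * v0) * (d0^2+d1^2) = 0 := by
        linear_combination (d0 * v1 - d1 * v0) * h1' + (d1 * u0 - d0 * u1) * h2'
      rcases mul_eq_zero.1 this with h | h
      · exact h
      · linarith
    have hpos : 0 < u0 * v0 + u1 * v1 := by
      have : r₂ * (u0 * v0 + u1 * v1) = r₁ * (u0^2+u1^2) := by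
        linear_combination (-u0) * hr0 - u1 * hr1 + (r₁ * a - r₂ * (b - 1)) * h1'
      have h3 : 0 < r₂ * (u0 * v0 + u1 * v1) := by
        rw [this]; exact mul_pos hr₁ hu
      exact pos_of_mul_pos_right h3 hr₂.le
    have hsq : (u0 * v0 + u1 * v1)^2 = (u0^2+u1^2) * (v0^2+v1^2) := by
      linear_combination (-(u0 * v1 - u1 * v0)) * hc
    have k1 : u0 * v0 + u1 * v1 < u0^2+u1^2 := by nlinarith
    have k2 : v0^2+v1^2 < u0 * v0 + u1 * v1 := by nlinarith
    constructor <;> nlinarith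
  obtain ⟨k1, k2⟩ := key
  have l1 : ∠ Δ A E < π / 2 := by
    by_contra! h
    have hc := Real.cos_nonpos_of_pi_div_two_le_of_le h (by linarith [angle_le_pi Δ A E, Real.pi_pos])
    have := InnerProductGeometry.cos_angle_mul_norm_mul_norm (Δ -ᵥ A) (E -ᵥ A)
    have h3 := mul_nonpos_of_nonpos_of_nonneg hc (by positivity : 0 ≤ ‖Δ -ᵥ A‖ * ‖E -ᵥ A‖)
    unfold EuclideanGeometry.angle at h3
    linarith
  have l2 : π / 2 < ∠ A E Γ := by
    by_contra! h
    have hc := Real.cos_nonneg_of_neg_pi_div_two_le_of_le (by linarith [angle_nonneg A E Γ, Real.pi_pos]) h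
    have := InnerProductGeometry.cos_angle_mul_norm_mul_norm (A -ᵥ E) (Γ -ᵥ E)
    have h3 := mul_nonneg hc (by positivity : 0 ≤ ‖A -ᵥ E‖ * ‖Γ -ᵥ E‖)
    unfold EuclideanGeometry.angle at h3
    linarith
  exact l1.trans l2
end

section
/- In a two-right-angled quadrilateral A E Γ Δ with base ΔΓ (right angles at Δ and Γ, with A and E strictly on the same side of the line through Δ and Γ), if the summit angles satisfy ∠ A E Γ > ∠ Δ A E, then the legs satisfy dist A Δ > dist E Γ (the greater summit angle is adjacent to the shorter leg). -/
open EuclideanGeometry Real RealInnerProductSpace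

theorem stmt5 (A E Γ Δ : EuclideanSpace ℝ (Fin 2))
    (hne : Δ ≠ Γ)
    (hAd : ∠ A Δ Γ = π / 2)
    (hEg : ∠ E Γ Δ = π / 2)
    (hside : AffineSubspace.SSameSide line[ℝ, Δ, Γ] A E)
    (hang : ∠ A E Γ > ∠ Δ A E) :
    dist A Δ > dist E Γ := by
  have hΔ : Δ ∈ line[ℝ, Δ, Γ] := left_mem_affineSpan_pair ℝ Δ Γ
  have hΓ : Γ ∈ line[ℝ, Δ, Γ] := right_mem_affineSpan_pair ℝ Δ Γ
  obtain ⟨hA, hE, p, hp, hray⟩ := (AffineSubspace.sSameSide_iff_exists_left hΔ).1 hside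
  have hu : A - Δ ≠ 0 := fun h => hA (by rw [sub_eq_zero.1 h]; exact hΔ)
  have hv : E - p ≠ 0 := fun h => hE (by rw [sub_eq_zero.1 h]; exact hp)
  have hd : Γ - Δ ≠ 0 := sub_ne_zero.2 hne.symm
  obtain ⟨t, ht, htv⟩ := hray.exists_pos_left hu hv
  obtain ⟨s, rfl⟩ := mem_affineSpan_pair_iff_exists_lineMap_eq.1 hp
  simp only [EuclideanGeometry.angle, vsub_eq_sub] at hAd hEg hang htv
  rw [← InnerProductGeometry.inner_eq_zero_iff_angle_eq_pi_div_two] at hAd hEg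
  rw [AffineMap.lineMap_apply] at htv
  simp only [vsub_eq_sub, vadd_eq_add] at htv
  obtain ⟨u, hu'⟩ : ∃ u, u = A - Δ := ⟨_, rfl⟩
  obtain ⟨d, hd'⟩ : ∃ d, d = Γ - Δ := ⟨_, rfl⟩
  have hAu : A = Δ + u := by rw [hu']; abel
  have hGd : Γ = Δ + d := by rw [hd']; abel
  rw [← hu'] at hAd htv hu
  rw [← hd'] at hAd htv hd
  have hEu : E = Γ + (t • u + (s - 1) • d) := by
    rw [htv, hGd, sub_smul, one_smul]; abel
  have hdd : 0 < ⟪d, d⟫ := real_inner_self_pos.2 hd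
  have hs : s = 1 := by
    rw [show E - Γ = t • u + (s - 1) • d by rw [hEu]; abel,
      show Δ - Γ = -d by rw [hGd]; abel, inner_neg_right, inner_add_left,
      real_inner_smul_left, real_inner_smul_left, hAd] at hEg
    have : (s - 1) * ⟪d, d⟫ = 0 := by linarith
    rcases mul_eq_zero.1 this with h | h
    · linarith
    · exact absurd h hdd.ne'
  subst hs
  have hun : 0 < ‖u‖ := norm_pos_iff.2 hu
  rw [show E = Δ + d + t • u by rw [hEu, hGd]; simp] at hang ⊢
  rw [hAu, hGd] at hang ⊢
  rw [dist_eq_norm, dist_eq_norm, show Δ + u - Δ = u by abel,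
    show Δ + d + t • u - (Δ + d) = t • u by abel, norm_smul, Real.norm_of_nonneg ht.le]
  have hlt : t < 1 := by
    by_contra hge
    push Not at hge
    obtain ⟨w, hw⟩ : ∃ w, w = d + (t - 1) • u := ⟨_, rfl⟩
    have huw : 0 ≤ ⟪u, w⟫ := by
      rw [hw, inner_add_right, hAd, real_inner_smul_right]
      have := real_inner_self_nonneg (x := u)
      nlinarith
    rw [show Δ + u - (Δ + d + t • u) = -w by rw [hw, sub_smul, one_smul]; abel,
      show Δ + d - (Δ + d + t • u) = -(t • u) by abel,
      show Δ - (Δ + u) = -u by abel,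
      show Δ + d + t • u - (Δ + u) = w by rw [hw, sub_smul, one_smul]; abel,
      InnerProductGeometry.angle_neg_neg, InnerProductGeometry.angle_smul_right_of_pos _ _ ht,
      InnerProductGeometry.angle_neg_left, InnerProductGeometry.angle_comm] at hang
    have : InnerProductGeometry.angle u w ≤ π / 2 :=
      Real.arccos_le_pi_div_two.2 (by positivity)
    linarith
  nlinarith
end

section
/- In a two-right-angled quadrilateral A E Γ Δ with base ΔΓ (right angles at Δ and Γ, with A and E strictly on the same side of the line through Δ and Γ), if the summit angles are equal, ∠ A E Γ = ∠ Δ A E, then the legs are equal: dist A Δ = dist E Γ. -/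
open EuclideanGeometry Real RealInnerProductSpace

theorem stmt6 (A E Γ Δ : EuclideanSpace ℝ (Fin 2))
    (hne : Δ ≠ Γ)
    (hAd : ∠ A Δ Γ = π / 2)
    (hEg : ∠ E Γ Δ = π / 2)
    (hside : AffineSubspace.SSameSide line[ℝ, Δ, Γ] A E)
    (hang : ∠ A E Γ = ∠ Δ A E) :
    dist A Δ = dist E Γ := by
  have hD : Δ ∈ line[ℝ, Δ, Γ] := left_mem_affineSpan_pair ℝ Δ Γ
  have hG : Γ ∈ line[ℝ, Δ, Γ] := right_mem_affineSpan_pair ℝ Δ Γ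
  have hA : A ≠ Δ := fun h => hside.2.1 (h ▸ hD)
  have hE : E ≠ Γ := fun h => hside.2.2 (h ▸ hG)
  have hopp : ¬ SameRay ℝ (A - Δ) (Γ - E) := fun h =>
    hside.not_wOppSide ⟨Δ, hD, Γ, hG, h⟩
  rw [EuclideanGeometry.angle, ← InnerProductGeometry.inner_eq_zero_iff_angle_eq_pi_div_two,
    vsub_eq_sub, vsub_eq_sub] at hAd hEg
  have hc := congrArg Real.cos hang
  rw [EuclideanGeometry.angle, EuclideanGeometry.angle, InnerProductGeometry.cos_angle,
    InnerProductGeometry.cos_angle] at hc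
  simp only [vsub_eq_sub] at hc
  rw [dist_eq_norm, dist_eq_norm]
  obtain ⟨u, hu⟩ : ∃ u, u = A - Δ := ⟨_, rfl⟩
  obtain ⟨v, hv⟩ : ∃ v, v = E - Γ := ⟨_, rfl⟩
  obtain ⟨d, hd⟩ : ∃ d, d = Γ - Δ := ⟨_, rfl⟩
  have e1 : A - E = u - v - d := by rw [hu, hv, hd]; abel
  have e2 : Γ - E = -v := by rw [hv]; abel
  have e3 : Δ - A = -u := by rw [hu]; abel
  have e4 : E - A = -(u - v - d) := by rw [hu, hv, hd]; abel
  have e5 : Δ - Γ = -d := by rw [hd]; abel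
  have hu0 : u ≠ 0 := hu ▸ sub_ne_zero.2 hA
  have hv0 : v ≠ 0 := hv ▸ sub_ne_zero.2 hE
  have hd0 : d ≠ 0 := hd ▸ sub_ne_zero.2 hne.symm
  rw [← hu, ← hd] at hAd
  rw [← hv, e5, inner_neg_right, neg_eq_zero] at hEg
  rw [e1, e2, e3, e4] at hc
  rw [← hu, e2] at hopp
  rw [← hu, ← hv]
  have hw : u - v - d ≠ 0 := by
    intro h
    have h2 : ⟪u - v - d, d⟫ = 0 := by rw [h, inner_zero_left]
    rw [inner_sub_left, inner_sub_left, hAd, hEg] at h2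
    have : ⟪d, d⟫ = 0 := by linarith
    exact hd0 (inner_self_eq_zero.1 this)
  have hdv : ⟪d, v⟫ = 0 := by rw [real_inner_comm]; exact hEg
  have n1 : ⟪u - v - d, -v⟫ = ‖v‖ ^ 2 - ⟪u, v⟫ := by
    rw [inner_neg_right, inner_sub_left, inner_sub_left, hdv, real_inner_self_eq_norm_sq]; ring
  have n2 : ⟪-u, -(u - v - d)⟫ = ‖u‖ ^ 2 - ⟪u, v⟫ := by
    rw [inner_neg_neg, inner_sub_right, inner_sub_right, hAd, real_inner_self_eq_norm_sq]; ring
  rw [n1, n2] at hc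
  simp only [norm_neg] at hc
  have pu := norm_pos_iff.2 hu0
  have pv := norm_pos_iff.2 hv0
  have pw := norm_pos_iff.2 hw
  have hi : ⟪u, v⟫ + ‖u‖ * ‖v‖ ≠ 0 := by
    intro h
    apply hopp
    rw [sameRay_iff_norm_smul_eq, eq_comm, eq_comm, ← inner_eq_norm_mul_iff_real.trans eq_comm, inner_neg_right, norm_neg]
    linarith
  rw [div_eq_div_iff (by positivity) (by positivity)] at hc
  have : ‖u - v - d‖ * ((‖u‖ - ‖v‖) * (⟪u, v⟫ + ‖u‖ * ‖v‖)) = 0 := by linear_combination -hc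
  rcases mul_eq_zero.1 this with h | h
  · exact absurd h pw.ne'
  · rcases mul_eq_zero.1 h with h | h
    · linarith
    · exact absurd h hi
end

section
/- In a Saccheri quadrilateral A B Γ Δ with base ΔΓ (right angles at Δ and Γ, equal legs dist A Δ = dist B Γ, with A and B strictly on the same side of the line through Δ and Γ), the segment joining the midpoint Z of the summit AB with the midpoint E of the base ΔΓ is perpendicular to the summit: ⟪(midpoint ℝ A B) - (midpoint ℝ Δ Γ), B - A⟫_ℝ = 0. -/
open EuclideanGeometry Real

local notation "⟪" x ", " y "⟫_ℝ" => @inner ℝ _ _ x y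

theorem stmt8 (A B Γ Δ : EuclideanSpace ℝ (Fin 2))
    (hne : Δ ≠ Γ)
    (hAd : ∠ A Δ Γ = π / 2)
    (hBg : ∠ B Γ Δ = π / 2)
    (hleg : dist A Δ = dist B Γ)
    (hside : AffineSubspace.SSameSide line[ℝ, Δ, Γ] A B) :
    ⟪(midpoint ℝ A B) - (midpoint ℝ Δ Γ), B - A⟫_ℝ = 0 := by 
  have h1 : inner ℝ (A - Δ) (Γ - Δ) = (0 : ℝ) :=
    InnerProductGeometry.inner_eq_zero_iff_angle_eq_pi_div_two _ _ |>.2 hAd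
  have h2 : inner ℝ (B - Γ) (Δ - Γ) = (0 : ℝ) :=
    InnerProductGeometry.inner_eq_zero_iff_angle_eq_pi_div_two _ _ |>.2 hBg
  have h3 : inner ℝ (A - Δ) (A - Δ) = (inner ℝ (B - Γ) (B - Γ) : ℝ) := by
    rw [real_inner_self_eq_norm_sq, real_inner_self_eq_norm_sq, ← dist_eq_norm,
      ← dist_eq_norm, hleg]
  have e1 : midpoint ℝ A B - midpoint ℝ Δ Γ = (1 / 2 : ℝ) • ((A - Δ) + (B - Γ)) := by
    rw [midpoint_eq_smul_add, midpoint_eq_smul_add, invOf_eq_inv]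
    module
  have e2 : B - A = (B - Γ) - (A - Δ) + (Γ - Δ) := by abel
  rw [← neg_sub Γ Δ, inner_neg_right] at h2
  rw [e1, e2, real_inner_smul_left, inner_add_left, inner_add_right, inner_add_right,
    inner_sub_right (A - Δ) (B - Γ), inner_sub_right (B - Γ) (B - Γ),
    real_inner_comm (A - Δ) (B - Γ)]
  linarith
end

section
/- In a Saccheri quadrilateral A B Γ Δ with base ΔΓ (right angles at Δ and Γ, equal legs dist A Δ = dist B Γ, with A and B strictly on the same side of the line through Δ and Γ), the segment joining the midpoint Z of the summit AB with the midpoint E of the base ΔΓ is perpendicular to the base: ⟪(midpoint ℝ A B) - (midpoint ℝ Δ Γ), Γ - Δ⟫_ℝ = 0. -/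
open EuclideanGeometry Real

local notation "⟪" x ", " y "⟫_ℝ" => @inner ℝ _ _ x y

theorem stmt9 (A B Γ Δ : EuclideanSpace ℝ (Fin 2))
    (hne : Δ ≠ Γ)
    (hAd : ∠ A Δ Γ = π / 2)
    (hBg : ∠ B Γ Δ = π / 2)
    (hleg : dist A Δ = dist B Γ)
    (hside : AffineSubspace.SSameSide line[ℝ, Δ, Γ] A B) :
    ⟪(midpoint ℝ A B) - (midpoint ℝ Δ Γ), Γ - Δ⟫_ℝ = 0 := by 
  have h1 : inner ℝ (A - Δ) (Γ - Δ) = 0 :=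
    (InnerProductGeometry.inner_eq_zero_iff_angle_eq_pi_div_two _ _).2 hAd
  have h2 : inner ℝ (B - Γ) (Δ - Γ) = 0 :=
    (InnerProductGeometry.inner_eq_zero_iff_angle_eq_pi_div_two _ _).2 hBg
  have h3 : inner ℝ (B - Γ) (Γ - Δ) = 0 := by
    rw [← neg_sub Δ Γ, inner_neg_right, h2, neg_zero]
  have h4 : midpoint ℝ A B - midpoint ℝ Δ Γ = (2⁻¹ : ℝ) • ((A - Δ) + (B - Γ)) := by
    rw [midpoint_eq_smul_add, midpoint_eq_smul_add, invOf_eq_inv, ← smul_sub]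
    congr 1
    abel
  rw [h4, inner_smul_left, inner_add_left, h1, h3]
  simp
end

section
/- In a Saccheri quadrilateral A B Γ Δ with base ΔΓ (right angles at Δ and Γ, equal legs dist A Δ = dist B Γ, with A and B strictly on the same side of the line through Δ and Γ), with Z = midpoint ℝ A B, the angles that the legs' endpoint segments make at Z are equal: ∠ A Z Δ = ∠ B Z Γ. -/
open EuclideanGeometry Real RealInnerProductSpace

theorem plane_pm (u v w : EuclideanSpace ℝ (Fin 2)) (hu : u ≠ 0)
    (hv : ⟪v, u⟫ = 0) (hw : ⟪w, u⟫ = 0) (h : ‖v‖ = ‖w‖) : v = w ∨ v = -w := by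
  have h2 : ‖v‖ ^ 2 = ‖w‖ ^ 2 := by rw [h]
  rw [EuclideanSpace.norm_sq_eq, EuclideanSpace.norm_sq_eq] at h2
  simp [PiLp.inner_apply, Fin.sum_univ_two] at hv hw h2
  have hdet : v 0 * w 1 - v 1 * w 0 = 0 := by
    by_contra hd
    apply hu
    ext i
    fin_cases i
    · have : (v 0 * w 1 - v 1 * w 0) * u 0 = 0 := by linear_combination w 1 * hv - v 1 * hw
      simpa [hd] using this
    · have : (v 0 * w 1 - v 1 * w 0) * u 1 = 0 := by linear_combination v 0 * hw - w 0 * hv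
      simpa [hd] using this
  have hprod : ((v 0 - w 0) ^ 2 + (v 1 - w 1) ^ 2) * ((v 0 + w 0) ^ 2 + (v 1 + w 1) ^ 2) = 0 := by
    linear_combination (v 0 ^ 2 + v 1 ^ 2 - w 0 ^ 2 - w 1 ^ 2) * h2 +
      4 * (v 0 * w 1 - v 1 * w 0) * hdet
  rcases mul_eq_zero.1 hprod with h | h
  · left
    ext i
    fin_cases i <;> simp <;> nlinarith [sq_nonneg (v 0 - w 0), sq_nonneg (v 1 - w 1)]
  · right
    ext i
    fin_cases i <;> simp <;> nlinarith [sq_nonneg (v 0 + w 0), sq_nonneg (v 1 + w 1)]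

theorem stmt10 (A B Γ Δ : EuclideanSpace ℝ (Fin 2))
    (hne : Δ ≠ Γ)
    (hAd : ∠ A Δ Γ = π / 2)
    (hBg : ∠ B Γ Δ = π / 2)
    (hleg : dist A Δ = dist B Γ)
    (hside : AffineSubspace.SSameSide line[ℝ, Δ, Γ] A B) :
    ∠ A (midpoint ℝ A B) Δ = ∠ B (midpoint ℝ A B) Γ := by
  unfold EuclideanGeometry.angle at hAd hBg
  rw [← InnerProductGeometry.inner_eq_zero_iff_angle_eq_pi_div_two] at hAd hBg
  simp only [vsub_eq_sub] at hAd hBg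
  rw [dist_eq_norm, dist_eq_norm] at hleg
  have hBg' : ⟪B - Γ, Γ - Δ⟫ = 0 := by
    rw [← neg_sub Δ Γ, inner_neg_right, hBg, neg_zero]
  rcases plane_pm (Γ - Δ) (A - Δ) (B - Γ) (sub_ne_zero.2 hne.symm) hAd hBg' hleg with h | h
  · obtain ⟨u, rfl⟩ : ∃ u, Γ = Δ + (2 : ℝ) • u :=
      ⟨(1 / 2 : ℝ) • (Γ - Δ), by module⟩
    obtain ⟨v, rfl⟩ : ∃ v, A = Δ + v := ⟨A - Δ, by module⟩
    have hB : B = Δ + (2 : ℝ) • u + v := by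
      rw [← sub_eq_iff_eq_add', ← h]; module
    subst hB
    have huv : ⟪v, u⟫ = 0 := by
      simpa [inner_smul_right] using hAd
    have huv' : ⟪u, v⟫ = 0 := by rw [real_inner_comm]; exact huv
    have hm : midpoint ℝ (Δ + v) (Δ + (2 : ℝ) • u + v) = Δ + u + v := by
      rw [midpoint_eq_smul_add, invOf_eq_inv]; module
    rw [hm]
    unfold EuclideanGeometry.angle
    have e1 : (Δ + v) -ᵥ (Δ + u + v) = -u := by rw [vsub_eq_sub]; module
    have e2 : Δ -ᵥ (Δ + u + v) = -(u + v) := by rw [vsub_eq_sub]; module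
    have e3 : (Δ + (2 : ℝ) • u + v) -ᵥ (Δ + u + v) = u := by rw [vsub_eq_sub]; module
    have e4 : (Δ + (2 : ℝ) • u) -ᵥ (Δ + u + v) = u - v := by rw [vsub_eq_sub]; module
    rw [e1, e2, e3, e4, InnerProductGeometry.angle_neg_neg]
    unfold InnerProductGeometry.angle
    have hn : ‖u + v‖ = ‖u - v‖ := by
      rw [← sq_eq_sq₀ (norm_nonneg _) (norm_nonneg _), norm_add_sq_real, norm_sub_sq_real, huv']
      ring
    rw [hn, inner_add_right, inner_sub_right, huv', add_zero, sub_zero]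
  · exfalso
    apply hside.not_wOppSide
    rw [AffineSubspace.wOppSide_iff_exists_wbtw]
    refine ⟨midpoint ℝ A B, ?_, wbtw_midpoint ℝ A B⟩
    have : midpoint ℝ A B = midpoint ℝ Δ Γ := by
      rw [midpoint_eq_smul_add, midpoint_eq_smul_add]
      congr 1
      rw [sub_eq_iff_eq_add] at h
      rw [h]; module
    rw [this]
    exact AffineMap.lineMap_mem_affineSpan_pair _ _ _
end

section
/- (Theorem 2, Case B.) Let A, B, Γ be points of the Euclidean plane, not collinear, with dist A B = dist B Γ, and let Δ = midpoint ℝ A Γ. If dist A Δ < dist B Δ, then the perpendicular bisector of AB meets the vertex-angle bisector BΔ strictly between B and Δ: there exists a point P with P strictly between B and Δ (Sbtw ℝ B P Δ) and dist P A = dist P B. -/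
open EuclideanGeometry Real RealInnerProductSpace

theorem stmt13 (A B Γ : EuclideanSpace ℝ (Fin 2))
    (hncol : ¬ Collinear ℝ ({A, B, Γ} : Set (EuclideanSpace ℝ (Fin 2))))
    (hiso : dist A B = dist B Γ)
    (h : dist A (midpoint ℝ A Γ) < dist B (midpoint ℝ A Γ)) :
    ∃ P : EuclideanSpace ℝ (Fin 2),
      Sbtw ℝ B P (midpoint ℝ A Γ) ∧ dist P A = dist P B := by
  have hAB : A ≠ B := by
    rintro rfl
    apply hncol
    simpa using collinear_pair ℝ A Γ
  have hpos : 0 < dist B A := dist_pos.2 hAB.symm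
  generalize midpoint ℝ A Γ = D at *
  -- intermediate value theorem along the segment from `B` to `D`
  let f : ℝ → ℝ := fun t =>
    dist (AffineMap.lineMap B D t) A - dist (AffineMap.lineMap B D t) B
  have hf : Continuous f := by
    have : Continuous (fun t : ℝ => AffineMap.lineMap B D t) :=
      AffineMap.lineMap_continuous
    exact (this.dist continuous_const).sub (this.dist continuous_const)
  have h0 : 0 < f 0 := by simpa [f] using hAB.symm
  have h1 : f 1 < 0 := by
    simpa [f, dist_comm] using h
  obtain ⟨t, ht, hft⟩ := intermediate_value_Icc' (zero_le_one' ℝ) hf.continuousOn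
    (show (0 : ℝ) ∈ Set.Icc (f 1) (f 0) from ⟨h1.le, h0.le⟩)
  refine ⟨AffineMap.lineMap B D t, ⟨⟨t, ht, rfl⟩, ?_, ?_⟩, sub_eq_zero.1 hft⟩
  · intro e
    simp only [f, e, dist_self] at hft
    linarith
  · intro e
    simp only [f, e, dist_comm D] at hft
    linarith
end

section
/- (Theorem 2, Case Γ.) Let A, B, Γ be points of the Euclidean plane, not collinear, with dist A B = dist B Γ, and let Δ = midpoint ℝ A Γ. If dist A Δ > dist B Δ, then the perpendicular bisector of AB meets the extension of the vertex-angle bisector BΔ beyond Δ: there exists a point P with Δ strictly between B and P (Sbtw ℝ B Δ P) and dist P A = dist P B. -/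
open EuclideanGeometry Real RealInnerProductSpace

theorem stmt14 (A B Γ : EuclideanSpace ℝ (Fin 2))
    (hncol : ¬ Collinear ℝ ({A, B, Γ} : Set (EuclideanSpace ℝ (Fin 2))))
    (hiso : dist A B = dist B Γ)
    (h : dist A (midpoint ℝ A Γ) > dist B (midpoint ℝ A Γ)) :
    ∃ P : EuclideanSpace ℝ (Fin 2),
      Sbtw ℝ B (midpoint ℝ A Γ) P ∧ dist P A = dist P B := by
  have hBM : B ≠ midpoint ℝ A Γ := by
    intro hB
    apply hncol
    have hw : Wbtw ℝ A B Γ := by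
      rw [hB]
      exact wbtw_midpoint ℝ A Γ
    exact hw.collinear
  obtain ⟨M, hM⟩ : ∃ M, M = midpoint ℝ A Γ := ⟨_, rfl⟩
  rw [← hM] at h hBM ⊢
  obtain ⟨u, hu⟩ : ∃ u, u = A - M := ⟨_, rfl⟩
  obtain ⟨v, hv⟩ : ∃ v, v = B - M := ⟨_, rfl⟩
  have hA : A = M + u := by rw [hu]; abel
  have hB : B = M + v := by rw [hv]; abel
  have hG : Γ = M - u := by
    have h2 : M + M = A + Γ := by rw [hM]; exact midpoint_add_self ℝ A Γ
    rw [hu]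
    have : Γ = M + M - A := by rw [h2]; abel
    rw [this]; abel
  clear hM hu hv hncol
  subst hA hB hG
  have hv0 : v ≠ 0 := by
    intro h0
    simp [h0] at hBM
  have hvp : 0 < ‖v‖ := norm_pos_iff.mpr hv0
  have e1 : dist (M + u) (M + v) = ‖u - v‖ := by rw [dist_eq_norm]; congr 1; abel
  have e2 : dist (M + v) (M - u) = ‖u + v‖ := by rw [dist_eq_norm]; congr 1; abel
  have e3 : dist (M + u) M = ‖u‖ := by rw [dist_eq_norm]; congr 1; abel
  have e4 : dist (M + v) M = ‖v‖ := by rw [dist_eq_norm]; congr 1; abel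
  rw [e1, e2] at hiso
  rw [e3, e4] at h
  have hin : inner ℝ u v = 0 := by
    have a1 := norm_sub_sq_real u v
    have a2 := norm_add_sq_real u v
    rw [hiso] at a1
    linarith
  obtain ⟨c, hc⟩ : ∃ c : ℝ, c = (‖u‖ ^ 2 - ‖v‖ ^ 2) / (2 * ‖v‖ ^ 2) := ⟨_, rfl⟩
  have hc0 : 0 < c := by
    rw [hc]
    apply div_pos
    · nlinarith
    · positivity
  have hc1 : c * (2 * ‖v‖ ^ 2) = ‖u‖ ^ 2 - ‖v‖ ^ 2 := by
    rw [hc]; field_simp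
  refine ⟨M - c • v, ⟨⟨1 / (1 + c), ⟨by positivity, ?_⟩, ?_⟩, hBM.symm, ?_⟩, ?_⟩
  · rw [div_le_one (by positivity)]; linarith
  · rw [AffineMap.lineMap_apply, vsub_eq_sub, vadd_eq_add]
    have : M - c • v - (M + v) = -((1 + c) • v) := by rw [add_smul, one_smul]; abel
    rw [this, smul_neg, smul_smul, one_div, inv_mul_cancel₀ (by positivity), one_smul]
    abel
  · intro h0
    have : c • v = 0 := sub_eq_self.mp h0.symm
    rcases smul_eq_zero.mp this with h1 | h1
    · exact hc0.ne' h1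
    · exact hv0 h1
  · have f1 : dist (M - c • v) (M + u) = ‖u + c • v‖ := by
      rw [dist_comm, dist_eq_norm]; congr 1; abel
    have f2 : dist (M - c • v) (M + v) = (1 + c) * ‖v‖ := by
      rw [dist_comm, dist_eq_norm]
      have : M + v - (M - c • v) = (1 + c) • v := by rw [add_smul, one_smul]; abel
      rw [this, norm_smul, Real.norm_of_nonneg (by positivity)]
    rw [f1, f2, ← sq_eq_sq₀ (by positivity) (by positivity), norm_add_sq_real,
      inner_smul_right, hin, norm_smul, Real.norm_of_nonneg hc0.le]
    linarith
end

section
/- (Main result: rejection of the acute-angle and obtuse-angle hypotheses in the Euclidean plane.) In a Saccheri quadrilateral A B Γ Δ with base ΔΓ (right angles at Δ and Γ, equal legs dist A Δ = dist B Γ, with A and B strictly on the same side of the line through Δ and Γ), the summit angles are right angles: ∠ Δ A B = π/2 and ∠ Γ B A = π/2, i.e. the quadrilateral is a rectangle. -/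
open EuclideanGeometry Real RealInnerProductSpace

theorem stmt16 (A B Γ Δ : EuclideanSpace ℝ (Fin 2))
    (hne : Δ ≠ Γ)
    (hAd : ∠ A Δ Γ = π / 2)
    (hBg : ∠ B Γ Δ = π / 2)
    (hleg : dist A Δ = dist B Γ)
    (hside : AffineSubspace.SSameSide line[ℝ, Δ, Γ] A B) :
    ∠ Δ A B = π / 2 ∧ ∠ Γ B A = π / 2 := by
  have hΔ : Δ ∈ line[ℝ, Δ, Γ] := left_mem_affineSpan_pair ℝ Δ Γ
  have hA : A ∉ line[ℝ, Δ, Γ] := hside.left_notMem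
  rw [AffineSubspace.sSameSide_iff_exists_left hΔ] at hside
  obtain ⟨-, -, p, hp, hray⟩ := hside
  obtain ⟨t, rfl⟩ := mem_affineSpan_pair_iff_exists_lineMap_eq.1 hp
  have hAΔ : A - Δ ≠ 0 := by
    intro h
    rw [sub_eq_zero] at h
    exact hA (h ▸ hΔ)
  obtain ⟨r, hr, hru⟩ := hray.exists_nonneg_left hAΔ
  have h1 : ⟪A - Δ, Γ - Δ⟫ = 0 :=
    (InnerProductGeometry.inner_eq_zero_iff_angle_eq_pi_div_two _ _).2 hAd
  have h2 : ⟪B - Γ, Δ - Γ⟫ = 0 :=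
    (InnerProductGeometry.inner_eq_zero_iff_angle_eq_pi_div_two _ _).2 hBg
  rw [dist_eq_norm, dist_eq_norm] at hleg
  have hd : Γ - Δ ≠ 0 := sub_ne_zero.2 hne.symm
  have hru2 : r • (A - Δ) = (B - Γ) + (1 - t) • (Γ - Δ) := by
    have : r • (A - Δ) = B - (t • (Γ - Δ) + Δ) := by
      simpa [AffineMap.lineMap_apply] using hru
    rw [this]
    module
  have h2' : ⟪B - Γ, Γ - Δ⟫ = 0 := by
    rw [← neg_sub Δ Γ, inner_neg_right, h2, neg_zero]
  have ht : 1 - t = 0 := by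
    have h := congrArg (fun x => ⟪x, Γ - Δ⟫) hru2
    simp only [inner_add_left, real_inner_smul_left, h1, h2', mul_zero, zero_add] at h
    rcases mul_eq_zero.1 h.symm with h | h
    · exact h
    · exact absurd (inner_self_eq_zero.1 h) hd
  rw [ht, zero_smul, add_zero] at hru2
  have hr1 : r = 1 := by
    have h := congrArg norm hru2
    rw [norm_smul, ← hleg, Real.norm_of_nonneg hr] at h
    exact (mul_eq_right₀ (norm_ne_zero_iff.2 hAΔ)).1 h
  rw [hr1, one_smul] at hru2
  have hBA : B - A = Γ - Δ := by
    have : B = (A - Δ) + Γ := by rw [hru2]; abel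
    rw [this]; abel
  constructor
  · apply (InnerProductGeometry.inner_eq_zero_iff_angle_eq_pi_div_two _ _).1
    change ⟪Δ - A, B - A⟫ = 0
    rw [hBA, ← neg_sub A Δ, inner_neg_left, h1, neg_zero]
  · apply (InnerProductGeometry.inner_eq_zero_iff_angle_eq_pi_div_two _ _).1
    change ⟪Γ - B, A - B⟫ = 0
    rw [← neg_sub B A, hBA, ← neg_sub B Γ, inner_neg_left, inner_neg_right, h2']
    simp
end

section
/- (Consequence of the main result.) In a Saccheri quadrilateral A B Γ Δ with base ΔΓ (right angles at Δ and Γ, equal legs dist A Δ = dist B Γ, with A and B strictly on the same side of the line through Δ and Γ), the summit equals the base: dist A B = dist Δ Γ. -/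
open EuclideanGeometry Real RealInnerProductSpace

theorem stmt17 (A B Γ Δ : EuclideanSpace ℝ (Fin 2))
    (hne : Δ ≠ Γ)
    (hAd : ∠ A Δ Γ = π / 2)
    (hBg : ∠ B Γ Δ = π / 2)
    (hleg : dist A Δ = dist B Γ)
    (hside : AffineSubspace.SSameSide line[ℝ, Δ, Γ] A B) :
    dist A B = dist Δ Γ := by
  have h1 : ⟪A - Δ, Γ - Δ⟫ = 0 := InnerProductGeometry.inner_eq_zero_iff_angle_eq_pi_div_two _ _ |>.2 hAd
  have h2 : ⟪B - Γ, Δ - Γ⟫ = 0 := InnerProductGeometry.inner_eq_zero_iff_angle_eq_pi_div_two _ _ |>.2 hBg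
  rw [AffineSubspace.sSameSide_iff_exists_left (left_mem_affineSpan_pair ℝ Δ Γ)] at hside
  obtain ⟨hA, hB, p, hp, hray⟩ := hside
  have hA0 : A -ᵥ Δ ≠ 0 := by
    rw [vsub_ne_zero]; rintro rfl; exact hA (left_mem_affineSpan_pair ℝ _ _)
  have hB0 : B -ᵥ p ≠ 0 := by
    rw [vsub_ne_zero]; rintro rfl; exact hB hp
  obtain ⟨r, s, hr, hs, hrs⟩ := hray.exists_pos hA0 hB0
  simp only [vsub_eq_sub] at *
  have h3 : ⟪B - p, Γ - Δ⟫ = 0 := by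
    have h4 := congrArg (fun v => ⟪v, Γ - Δ⟫) hrs
    simp only [real_inner_smul_left, h1, mul_zero] at h4
    exact (mul_eq_zero.1 h4.symm).resolve_left hs.ne'
  obtain ⟨t, rfl⟩ := (mem_affineSpan_pair_iff_exists_lineMap_eq).1 hp
  have h5 : ⟪B - Γ, Γ - Δ⟫ = 0 := by
    rw [← neg_sub Δ Γ, inner_neg_right, h2, neg_zero]
  have h6 : B - AffineMap.lineMap Δ Γ t = (B - Γ) + (1 - t) • (Γ - Δ) := by
    rw [AffineMap.lineMap_apply]; simp only [vsub_eq_sub, vadd_eq_add]; module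
  have h7 : Γ - Δ ≠ 0 := sub_ne_zero.2 hne.symm
  have h8 : 1 - t = 0 := by
    rw [h6, inner_add_left, h5, real_inner_smul_left, zero_add] at h3
    exact (mul_eq_zero.1 h3).resolve_right (inner_self_ne_zero.2 h7)
  rw [h6, h8, zero_smul, add_zero] at hray
  rw [dist_eq_norm, dist_eq_norm] at hleg
  have h9 : A - Δ = B - Γ := (sameRay_iff_of_norm_eq hleg).1 hray
  rw [dist_eq_norm, dist_eq_norm]
  congr 1
  rw [sub_eq_sub_iff_add_eq_add] at h9 ⊢
  rw [h9, add_comm]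
end
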